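/- Let M be a properly infinite σ-finite von Neumann algebra with a faithful normal semifinite trace τ, and let α ∈ M^n (n ≥ 1) be a commuting self-adjoint n-tuple such that the only finite projection of M belonging to WZ*(α) is 0. Given any sequence (p_k)_{k≥0} of τ-finite projections in M and any sequence (ε_k)_{k≥0} of positive real numbers, there exists a sequence (w_k)_{k≥0} of partial isometries in M such that w_l* w_k = δ_{l,k} p_k for all l, k ≥ 0 and ‖[w_k, α]‖ ≤ ε_k + ‖[p_k, α]‖ for all k ≥ 0. -/

import Mathlib

open ContinuousLinearMap Filter Topology

noncomputable section

namespace VNA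

variable {H : Type*} [NormedAddCommGroup H] [InnerProductSpace ℂ H] [CompleteSpace H]

/-- A projection (orthogonal projection): idempotent and self-adjoint. -/
def IsProjection (p : H →L[ℂ] H) : Prop := p * p = p ∧ star p = p

/-- Murray–von Neumann equivalence of `p` and `q` relative to `M`. -/
def MvNE (M : VonNeumannAlgebra H) (p q : H →L[ℂ] H) : Prop :=
  ∃ v ∈ M, star v * v = p ∧ v * star v = q

/-- `p` is a finite projection of `M`; for projections, `q ≤ p` is the range
containment `p * q = q`. -/
def IsFiniteProjection (M : VonNeumannAlgebra H) (p : H →L[ℂ] H) : Prop :=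
  p ∈ M ∧ IsProjection p ∧
    ∀ q, q ∈ M → IsProjection q → p * q = q → MvNE M q p → q = p

def IsInfiniteProjection (M : VonNeumannAlgebra H) (p : H →L[ℂ] H) : Prop :=
  p ∈ M ∧ IsProjection p ∧ ¬ IsFiniteProjection M p

/-- The centre `Z(M) = M ∩ M'` as a set. -/
def centerSet (M : VonNeumannAlgebra H) : Set (H →L[ℂ] H) :=
  {z | z ∈ M ∧ ∀ y ∈ M, z * y = y * z}

def IsCentralProjection (M : VonNeumannAlgebra H) (z : H →L[ℂ] H) : Prop :=
  IsProjection z ∧ z ∈ centerSet M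

def IsProperlyInfiniteProjection (M : VonNeumannAlgebra H) (p : H →L[ℂ] H) : Prop :=
  p ∈ M ∧ IsProjection p ∧
    ∀ z, IsCentralProjection M z → z * p ≠ 0 → IsInfiniteProjection M (z * p)

def ProperlyInfinite (M : VonNeumannAlgebra H) : Prop :=
  IsProperlyInfiniteProjection M 1

/-- `M` is σ-finite: every family of pairwise orthogonal nonzero projections in `M`
is countable. -/
def SigmaFinite (M : VonNeumannAlgebra H) : Prop :=
  ∀ S : Set (H →L[ℂ] H), (∀ p ∈ S, p ∈ M ∧ IsProjection p ∧ p ≠ 0) →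
    (∀ p ∈ S, ∀ q ∈ S, p ≠ q → p * q = 0) → S.Countable

/-- A faithful normal semifinite trace on `M`. -/
structure IsFNSTrace (M : VonNeumannAlgebra H) (τ : (H →L[ℂ] H) → ENNReal) : Prop where
  map_zero : τ 0 = 0
  additive : ∀ x y : H →L[ℂ] H, x ∈ M → y ∈ M → 0 ≤ x → 0 ≤ y → τ (x + y) = τ x + τ y
  homogeneous : ∀ (c : ℝ) (x : H →L[ℂ] H), 0 ≤ c → x ∈ M → 0 ≤ x →
    τ (c • x) = ENNReal.ofReal c * τ x
  tracial : ∀ x : H →L[ℂ] H, x ∈ M → τ (star x * x) = τ (x * star x)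
  faithful : ∀ x : H →L[ℂ] H, x ∈ M → 0 ≤ x → τ x = 0 → x = 0
  normal : ∀ (ι : Type*) [Preorder ι] [IsDirected ι (· ≤ ·)] [Nonempty ι]
      (f : ι → (H →L[ℂ] H)) (x : H →L[ℂ] H),
      (∀ i, f i ∈ M) → (∀ i, 0 ≤ f i) → Monotone f → (∃ C : ℝ, ∀ i, ‖f i‖ ≤ C) →
      x ∈ M → IsLUB (Set.range f) x → τ x = ⨆ i, τ (f i)
  semifinite : ∀ x : H →L[ℂ] H, x ∈ M → 0 ≤ x → x ≠ 0 →
      ∃ y, y ∈ M ∧ 0 ≤ y ∧ y ≤ x ∧ y ≠ 0 ∧ τ y < ⊤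

/-- `p` is a `τ`-finite projection of `M`. -/
def IsTauFiniteProjection (M : VonNeumannAlgebra H) (τ : (H →L[ℂ] H) → ENNReal)
    (p : H →L[ℂ] H) : Prop :=
  p ∈ M ∧ IsProjection p ∧ τ p < ⊤

/-- `F₁⁺(M) = {x ∈ M : 0 ≤ x ≤ 1, px = x for some τ-finite projection p}`. -/
def F1plus (M : VonNeumannAlgebra H) (τ : (H →L[ℂ] H) → ENNReal) : Set (H →L[ℂ] H) :=
  {x | x ∈ M ∧ 0 ≤ x ∧ x ≤ 1 ∧ ∃ p, IsTauFiniteProjection M τ p ∧ p * x = x}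

/-- `K(M,τ)`: operator-norm closure of the τ-finitely supported elements of `M`. -/
def Kideal (M : VonNeumannAlgebra H) (τ : (H →L[ℂ] H) → ENNReal) : Set (H →L[ℂ] H) :=
  closure {x | x ∈ M ∧ ∃ p, IsTauFiniteProjection M τ p ∧ p * x = x}

/-- A commuting self-adjoint `n`-tuple in `M`. -/
def IsCommutingSelfAdjointTuple (M : VonNeumannAlgebra H) {n : ℕ}
    (α : Fin n → (H →L[ℂ] H)) : Prop :=
  (∀ j, α j ∈ M) ∧ (∀ j, star (α j) = α j) ∧ ∀ i j, α i * α j = α j * α i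

/-- `‖[r,α]‖ = max_{1≤j≤n} ‖[r, α(j)]‖`. -/
def commNorm {n : ℕ} (α : Fin n → (H →L[ℂ] H)) (r : H →L[ℂ] H) : ℝ :=
  ⨆ j, ‖r * α j - α j * r‖

/-- `WZ*(S)`: the double commutant in `B(H)` of `S ∪ Z(M)`. -/
def WZstar (M : VonNeumannAlgebra H) (S : Set (H →L[ℂ] H)) : Set (H →L[ℂ] H) :=
  Set.centralizer (Set.centralizer (S ∪ centerSet M))

/-- A diagonal operator of `M`: `d = Σ_k λ_k p_k` with pairwise orthogonal
projections `p_k ∈ M`, the series converging in the strong operator topology. -/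
def IsDiagonal (M : VonNeumannAlgebra H) (d : H →L[ℂ] H) : Prop :=
  ∃ (p : ℕ → H →L[ℂ] H) (lam : ℕ → ℂ),
    (∀ k, p k ∈ M) ∧ (∀ k, IsProjection (p k)) ∧
    (∀ k l, k ≠ l → p k * p l = 0) ∧
    ∀ ξ : H, HasSum (fun k => lam k • (p k ξ)) (d ξ)

end VNA


namespace VNA18
open VNA

variable {H : Type*} [NormedAddCommGroup H] [InnerProductSpace ℂ H] [CompleteSpace H]

lemma proj_nonneg {p : H →L[ℂ] H} (hp : IsProjection p) : 0 ≤ p := by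
  have := star_mul_self_nonneg p
  rwa [hp.2, hp.1] at this

lemma proj_one_sub {p : H →L[ℂ] H} (hp : IsProjection p) : IsProjection (1 - p) := by
  refine ⟨?_, by simp [hp.2]⟩
  simp [mul_sub, sub_mul, hp.1]

lemma proj_le_one {p : H →L[ℂ] H} (hp : IsProjection p) : p ≤ 1 :=
  sub_nonneg.mp (proj_nonneg (proj_one_sub hp))

/-- difference of nested projections -/
lemma proj_sub {p q : H →L[ℂ] H} (hp : IsProjection p) (hq : IsProjection q)
    (h : p * q = q) : IsProjection (p - q) := by
  have h' : q * p = q := by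
    have := congrArg star h
    simpa [hp.2, hq.2] using this
  refine ⟨?_, by simp [hp.2, hq.2]⟩
  simp [mul_sub, sub_mul, hp.1, hq.1, h, h']

lemma proj_mul {p q : H →L[ℂ] H} (hp : IsProjection p) (hq : IsProjection q)
    (h : p * q = q * p) : IsProjection (p * q) := by
  refine ⟨?_, by simp [hp.2, hq.2, h]⟩
  calc p * q * (p * q) = p * (q * p) * q := by simp only [mul_assoc]
    _ = p * p * (q * q) := by rw [← h]; simp only [mul_assoc]
    _ = p * q := by rw [hp.1, hq.1]

/-- initial projection of a partial isometry -/
lemma pi_source {v : H →L[ℂ] H} (h : v * star v * v = v) : IsProjection (star v * v) :=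
  ⟨by rw [mul_assoc, ← mul_assoc v, h], by simp⟩

lemma pi_star {v : H →L[ℂ] H} (h : v * star v * v = v) :
    star v * star (star v) * star v = star v := by
  have := congrArg star h
  simpa [mul_assoc] using this

lemma pi_of_source {v f : H →L[ℂ] H} (hf : IsProjection f) (h : star v * v = f) : v * f = v := by
  have : star (v - v * f) * (v - v * f) = 0 := by
    have e1 : star (v - v * f) = star v - f * star v := by simp [hf.2]
    rw [e1]
    simp only [mul_sub, sub_mul, ← mul_assoc, h]
    simp only [mul_assoc, h, hf.1]
    simp only [← mul_assoc, sub_self]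
  have := (CStarRing.star_mul_self_eq_zero_iff _).mp this
  exact (sub_eq_zero.mp this).symm

lemma norm_le_one_of_proj {v f : H →L[ℂ] H} (hf : IsProjection f) (h : star v * v = f) :
    ‖v‖ ≤ 1 := by
  have h1 : ‖f‖ ≤ 1 := (CStarAlgebra.norm_le_one_iff_of_nonneg f (proj_nonneg hf)).mpr
    (proj_le_one hf)
  rw [← h, CStarRing.norm_star_mul_self] at h1
  nlinarith [norm_nonneg v]

lemma conj_le {q c : H →L[ℂ] H} (hq : IsProjection q) (hc : c ≤ 1) (h : q * c = c)
    (hs : star c = c) : c ≤ q := by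
  have h1 := star_left_conjugate_le_conjugate hc q
  have h' : c * q = c := by
    have := congrArg star h
    simpa [hq.2, hs] using this
  rw [hq.2, h, h', mul_one, hq.1] at h1
  exact h1

lemma mem_M_of_comm (M : VonNeumannAlgebra H) {x : H →L[ℂ] H}
    (h : ∀ y ∈ M.commutant, y * x = x * y) : x ∈ M := by
  rw [← VonNeumannAlgebra.commutant_commutant M, VonNeumannAlgebra.mem_commutant_iff]
  exact h

lemma comm_of_mem (M : VonNeumannAlgebra H) {x y : H →L[ℂ] H} (hx : x ∈ M)
    (hy : y ∈ M.commutant) : y * x = x * y :=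
  ((VonNeumannAlgebra.mem_commutant_iff.mp hy) x hx).symm

lemma cfc_mem (M : VonNeumannAlgebra H) {a : H →L[ℂ] H} (ha : a ∈ M)
    (f : ℝ → ℝ) : cfc f a ∈ M := by
  apply mem_M_of_comm
  intro y hy
  have : Commute a y := (comm_of_mem M ha hy).symm
  exact (this.cfc_real f).symm

/-- support projections -/
lemma exists_supp (T : Set (H →L[ℂ] H)) : ∃ P : H →L[ℂ] H, IsProjection P ∧
    (∀ b ∈ T, P * b = b) ∧
    (∀ K : Submodule ℂ H, IsClosed (K : Set H) → (∀ b ∈ T, ∀ ξ, b ξ ∈ K) → ∀ ξ, P ξ ∈ K) := by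
  let K : Submodule ℂ H := (Submodule.span ℂ {η | ∃ b ∈ T, ∃ ξ, b ξ = η}).topologicalClosure
  have : CompleteSpace K := (Submodule.isClosed_topologicalClosure _).completeSpace_coe
  refine ⟨K.starProjection, ⟨K.isIdempotentElem_starProjection, isSelfAdjoint_starProjection K⟩,
    ?_, ?_⟩
  · intro b hb
    ext ξ
    have : b ξ ∈ K := Submodule.le_topologicalClosure _ (Submodule.subset_span ⟨b, hb, ξ, rfl⟩)
    simpa using Submodule.starProjection_eq_self_iff.mpr this
  · intro L hL h ξ
    have h1 : K ≤ L := by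
      apply Submodule.topologicalClosure_minimal _ _ hL
      rw [Submodule.span_le]
      rintro η ⟨b, hb, ξ, rfl⟩
      exact h b hb ξ
    exact h1 (K.starProjection_apply_mem ξ)

lemma supp_kill {T : Set (H →L[ℂ] H)} {P : H →L[ℂ] H}
    (h : ∀ K : Submodule ℂ H, IsClosed (K : Set H) → (∀ b ∈ T, ∀ ξ, b ξ ∈ K) → ∀ ξ, P ξ ∈ K)
    (c : H →L[ℂ] H) (hc : ∀ b ∈ T, c * b = 0) : c * P = 0 := by
  have := h (LinearMap.ker (c : H →ₗ[ℂ] H)) (ContinuousLinearMap.isClosed_ker c)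
    (fun b hb ξ => by
      have := congrArg (fun x : H →L[ℂ] H => x ξ) (hc b hb)
      simpa using this)
  ext ξ
  simpa using this ξ

lemma supp_comm {T : Set (H →L[ℂ] H)} {P : H →L[ℂ] H} (hP : IsProjection P)
    (h : ∀ K : Submodule ℂ H, IsClosed (K : Set H) → (∀ b ∈ T, ∀ ξ, b ξ ∈ K) → ∀ ξ, P ξ ∈ K)
    (y : H →L[ℂ] H) (h1 : ∀ b ∈ T, P * (y * b) = y * b)
    (h2 : ∀ b ∈ T, P * (star y * b) = star y * b) : y * P = P * y := by
  have e1 : ((1 - P) * y) * P = 0 := supp_kill h _ (fun b hb => by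
    rw [mul_assoc, sub_mul, h1 b hb, one_mul, sub_self])
  have e2 : ((1 - P) * star y) * P = 0 := supp_kill h _ (fun b hb => by
    rw [mul_assoc, sub_mul, h2 b hb, one_mul, sub_self])
  have e3 := congrArg star e2
  simp only [star_mul, star_sub, star_one, hP.2, star_star, star_zero] at e3
  rw [sub_mul, sub_mul, one_mul, sub_eq_zero] at e1
  rw [mul_sub, mul_sub, mul_one, sub_eq_zero, ← mul_assoc] at e3
  exact e1.trans e3.symm

lemma supp_comm' {b P : H →L[ℂ] H} (hP : IsProjection P) (hb : P * b = b)
    (h : ∀ K : Submodule ℂ H, IsClosed (K : Set H) →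
      (∀ b' ∈ ({b} : Set (H →L[ℂ] H)), ∀ ξ, b' ξ ∈ K) → ∀ ξ, P ξ ∈ K)
    (hs : star b = b)
    (y : H →L[ℂ] H) (h1 : y * b = b * y) : y * P = P * y := by
  have h2 : star y * b = b * star y := by
    have := congrArg star h1
    simpa [hs] using this.symm
  refine supp_comm hP h y ?_ ?_
  · rintro _ rfl; rw [h1, ← mul_assoc, hb]
  · rintro _ rfl; rw [h2, ← mul_assoc, hb]

/-- nonzero elements yield nonzero partial isometries -/
lemma exists_pi (M : VonNeumannAlgebra H) {x : H →L[ℂ] H} (hx : x ∈ M) (h0 : x ≠ 0) :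
    ∃ y ∈ M, y ≠ 0 ∧ y * star y * y = y ∧ (∀ g, g * x = x → g * y = y) ∧
      (∀ f, star f = f → x * f = x → y * f = y) := by
  set a := star x * x with ha
  have haM : a ∈ M := mul_mem (star_mem hx) hx
  have hapos : 0 ≤ a := star_mul_self_nonneg x
  have hasa : IsSelfAdjoint a := IsSelfAdjoint.star_mul_self x
  have hane : a ≠ 0 := by
    intro h; exact h0 ((CStarRing.star_mul_self_eq_zero_iff x).mp h)
  set t : ℝ := ‖a‖ / 2 with ht
  have htpos : 0 < t := by have := norm_pos_iff.mpr hane; positivity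
  have hmax : ∀ s : ℝ, 0 < max s t := fun s => lt_of_lt_of_le htpos (le_max_right _ _)
  have hmax' : ∀ s : ℝ, max s t ≠ 0 := fun s => (hmax s).ne'
  let c : ℝ → ℝ := fun s => max (s - t) 0 / max s t
  have hc : Continuous c := by
    apply Continuous.div _ _ hmax' <;> fun_prop
  let hh : ℝ → ℝ := fun s => 1 / Real.sqrt (max s t)
  have hhc : Continuous hh := by
    apply Continuous.div
    · fun_prop
    · fun_prop
    · intro s; exact (Real.sqrt_pos.mpr (hmax s)).ne'
  have hid : cfc (fun s : ℝ => s) a = a := cfc_id' ℝ a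
  set d := cfc (fun s : ℝ => max (s - t) 0) a with hd
  have hdsa : star d = d := (cfc_predicate (p := IsSelfAdjoint) (fun s : ℝ => max (s - t) 0) a)
  have hdac : d = a * cfc c a := by
    have h1 := cfc_mul (fun s : ℝ => s) c a (by fun_prop) hc.continuousOn
    rw [hid] at h1
    rw [← h1, hd]
    congr 1
    ext s
    simp only [c]
    rcases le_total s t with h | h
    · rw [max_eq_right (by linarith)]; simp
    · rw [max_eq_left (by linarith), max_eq_left h]
      have : s ≠ 0 := by linarith
      field_simp
  have hdne : d ≠ 0 := by
    intro h
    have h1 : a ≤ algebraMap ℝ _ t + d := by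
      have : algebraMap ℝ (H →L[ℂ] H) t + d = cfc (fun s : ℝ => t + max (s - t) 0) a := by
        rw [cfc_const_add t (fun s : ℝ => max (s - t) 0) a]
      rw [this]
      conv_lhs => rw [← hid]
      refine cfc_mono ?_ (by fun_prop) (by fun_prop)
      intro s _
      have := le_max_left (s - t) 0
      linarith
    rw [h, add_zero] at h1
    have := (CStarAlgebra.norm_le_iff_le_algebraMap a htpos.le hapos).mpr h1
    have := norm_pos_iff.mpr hane
    linarith
  obtain ⟨e, he, hed, heK⟩ := exists_supp ({d} : Set (H →L[ℂ] H))
  have hed' : e * d = d := hed d rfl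
  have hene : e ≠ 0 := by
    rintro rfl
    apply hdne
    rw [← hed', zero_mul]
  have hcomm : ∀ y, y * a = a * y → y * e = e * y := by
    intro y hy
    apply supp_comm' he hed' heK hdsa
    have : Commute a y := hy.symm
    exact (this.cfc_real _).symm
  set h := cfc hh a with hh_def
  have hhsa : star h = h := (cfc_predicate (p := IsSelfAdjoint) hh a)
  have hha : h * a = a * h := (Commute.cfc_real (Commute.refl a) hh)
  have hhe : h * e = e * h := hcomm h hha
  have hke : h * a * h * e = e := by
    have hk : h * a * h = cfc (fun s => hh s * s * hh s) a := by
      rw [cfc_mul (fun s => hh s * s) hh a (by fun_prop) hhc.continuousOn,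
        cfc_mul hh (fun s => s) a hhc.continuousOn (by fun_prop), hid]
    have : (1 - h * a * h) * e = 0 := by
      apply supp_kill heK
      rintro _ rfl
      rw [sub_mul, one_mul, hk, hd, ← cfc_mul _ _ a (by fun_prop) (by fun_prop), sub_eq_zero]
      congr 1
      ext s
      simp only [hh]
      rcases le_total s t with h | h
      · rw [max_eq_right (a := s - t) (by linarith)]; simp
      · have h3 : 0 < s := by linarith
        have h4 := Real.sq_sqrt h3.le
        have h5 := (Real.sqrt_pos.mpr h3).ne'
        rw [max_eq_left h]
        have : 1 / √s * s * (1 / √s) = 1 := by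
          field_simp; exact h4.symm
        rw [this, one_mul]
    rw [sub_mul, one_mul, sub_eq_zero] at this
    exact this.symm
  have hyy : star (x * h * e) * (x * h * e) = e := by
    calc star (x * h * e) * (x * h * e) = e * (h * a * h * e) := by
          simp only [star_mul, he.2, hhsa, ha, mul_assoc]
      _ = e := by rw [hke, he.1]
  have heM : e ∈ M := by
    apply mem_M_of_comm
    intro y hy
    exact hcomm y (comm_of_mem M haM hy)
  refine ⟨x * h * e, mul_mem (mul_mem hx (cfc_mem M haM _)) heM, ?_, ?_, ?_, ?_⟩
  · intro h0
    rw [h0] at hyy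
    simp at hyy
    exact hene hyy.symm
  · rw [mul_assoc, hyy, mul_assoc, he.1]
  · intro g hg
    rw [← mul_assoc, ← mul_assoc, hg]
  · intro f hfs hf
    have hfa : f * a = a := by
      have : star f * star x = star x := by rw [← star_mul, hf]
      rw [ha, ← mul_assoc, ← hfs, this]
    have : (1 - f) * e = 0 := by
      apply supp_kill heK
      rintro _ rfl
      rw [sub_mul, one_mul, hdac, ← mul_assoc, hfa, sub_self]
    rw [sub_mul, one_mul, sub_eq_zero] at this
    have h2 := congrArg star this
    rw [star_mul, he.2, hfs] at h2
    rw [mul_assoc, ← h2]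

/-- strong sums of orthogonal families of partial isometries -/
lemma exists_sum {ι : Type*} (u : ι → (H →L[ℂ] H)) (hu : ∀ i, u i * star (u i) * u i = u i)
    (h1 : ∀ i j, i ≠ j → star (u i) * u j = 0) (h2 : ∀ i j, i ≠ j → u i * star (u j) = 0) :
    ∃ v : H →L[ℂ] H, ∀ ξ, HasSum (fun i => u i ξ) (v ξ) := by
  classical
  have hF : ∀ F : Finset ι, ‖∑ i ∈ F, u i‖ ≤ 1 := by
    intro F
    refine norm_le_one_of_proj (f := star (∑ i ∈ F, u i) * (∑ i ∈ F, u i)) ?_ rfl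
    apply pi_source
    have e1 : star (∑ i ∈ F, u i) * (∑ i ∈ F, u i) = ∑ i ∈ F, star (u i) * u i := by
      rw [star_sum, Finset.sum_mul_sum]
      refine Finset.sum_congr rfl fun i hi => ?_
      rw [Finset.sum_eq_single i (fun j _ hj => h1 i j hj.symm) (fun h => absurd hi h)]
    rw [mul_assoc, e1, Finset.sum_mul_sum]
    refine Finset.sum_congr rfl fun i hi => ?_
    rw [Finset.sum_eq_single i (fun j _ hj => by rw [← mul_assoc, h2 i j hj.symm, zero_mul])
      (fun h => absurd hi h), ← mul_assoc, hu]
  have hFx : ∀ (F : Finset ι) ξ, ‖∑ i ∈ F, u i ξ‖ ≤ ‖ξ‖ := by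
    intro F ξ
    have := ContinuousLinearMap.le_of_opNorm_le _ (hF F) ξ
    simpa [ContinuousLinearMap.sum_apply] using this
  have horth : OrthogonalFamily ℂ (fun i => LinearMap.range (u i : H →ₗ[ℂ] H))
      (fun i => (LinearMap.range (u i : H →ₗ[ℂ] H)).subtypeₗᵢ) := by
    rintro i j hij ⟨_, ξ, rfl⟩ ⟨_, η, rfl⟩
    change inner ℂ (u i ξ) (u j η) = 0
    rw [← ContinuousLinearMap.adjoint_inner_right, ← ContinuousLinearMap.star_eq_adjoint]
    have := congrArg (fun x : H →L[ℂ] H => x η) (h1 i j hij)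
    simp only [ContinuousLinearMap.mul_apply, ContinuousLinearMap.zero_apply] at this
    rw [this, inner_zero_right]
  have hsum : ∀ ξ, Summable (fun i => u i ξ) := by
    intro ξ
    have key := horth.summable_iff_norm_sq_summable (fun i => ⟨u i ξ, ξ, rfl⟩)
    have : Summable (fun i => ‖(⟨u i ξ, ξ, rfl⟩ : LinearMap.range (u i : H →ₗ[ℂ] H))‖ ^ 2) := by
      refine summable_of_sum_le (c := ‖ξ‖ ^ 2) (fun i => by positivity) (fun F => ?_)
      rw [← horth.norm_sum (fun i => ⟨u i ξ, ξ, rfl⟩) F]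
      have := hFx F ξ
      have h0 := norm_nonneg (∑ i ∈ F, u i ξ)
      change ‖∑ i ∈ F, u i ξ‖ ^ 2 ≤ _
      gcongr
    exact key.mpr this
  let L : H →ₗ[ℂ] H :=
    { toFun := fun ξ => ∑' i, u i ξ
      map_add' := fun ξ η => by
        simp only [map_add]
        exact (hsum ξ).tsum_add (hsum η)
      map_smul' := fun c ξ => by
        simp only [map_smul, RingHom.id_apply]
        exact (hsum ξ).tsum_const_smul c }
  refine ⟨L.mkContinuous 1 ?_, fun ξ => (hsum ξ).hasSum⟩
  intro ξ
  rw [one_mul]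
  exact le_of_tendsto (hsum ξ).hasSum.norm (Filter.Eventually.of_forall fun F => hFx F ξ)

lemma exists_sum' {ι : Type*} (u : ι → (H →L[ℂ] H)) (hu : ∀ i, u i * star (u i) * u i = u i)
    (h1 : ∀ i j, i ≠ j → star (u i) * u j = 0) (h2 : ∀ i j, i ≠ j → u i * star (u j) = 0) :
    ∃ v : H →L[ℂ] H, (∀ ξ, HasSum (fun i => u i ξ) (v ξ)) ∧ v * star v * v = v ∧
      (∀ i, v * star v * u i = u i) ∧ (∀ i, u i * (star v * v) = u i) := by
  obtain ⟨v, hv⟩ := exists_sum u hu h1 h2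
  obtain ⟨v', hv'⟩ := exists_sum (fun i => star (u i)) (fun i => pi_star (hu i))
    (fun i j hij => by simpa using h2 i j hij) (fun i j hij => by simpa using h1 i j hij)
  have hadj : v' = star v := by
    rw [ContinuousLinearMap.star_eq_adjoint, ContinuousLinearMap.eq_adjoint_iff]
    intro x y
    have s1 : HasSum (fun i => inner ℂ (star (u i) x) y) (inner ℂ (v' x) y) := by
      have := ((innerSL ℂ y).hasSum (hv' x)).map (starRingEnd ℂ) (Complex.continuous_conj)
      simpa [Function.comp_def] using this
    have s2 : HasSum (fun i => inner ℂ x (u i y)) (inner ℂ x (v y)) :=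
      (innerSL ℂ x).hasSum (hv y)
    have : (fun i => inner ℂ (star (u i) x) y) = (fun i => inner ℂ x (u i y)) := by
      ext i
      rw [ContinuousLinearMap.star_eq_adjoint, ContinuousLinearMap.adjoint_inner_left]
    rw [this] at s1
    exact s1.unique s2
  have k1 : ∀ i, star (u i) * v = star (u i) * u i := by
    intro i
    ext ξ
    have s1 := (star (u i)).hasSum (hv ξ)
    have s2 := hasSum_single (f := fun j => star (u i) (u j ξ)) i (fun j hj => by
      have := congrArg (fun x : H →L[ℂ] H => x ξ) (h1 i j hj.symm)
      simpa using this)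
    exact s1.unique s2
  have k2 : ∀ i, u i * star v = u i * star (u i) := by
    intro i
    ext ξ
    rw [← hadj]
    have s1 := (u i).hasSum (hv' ξ)
    have s2 := hasSum_single (f := fun j => u i (star (u j) ξ)) i (fun j hj => by
      have := congrArg (fun x : H →L[ℂ] H => x ξ) (h2 i j hj.symm)
      simpa using this)
    exact s1.unique s2
  have k3 : ∀ i, star v * u i = star (u i) * u i := fun i => by
    simpa using congrArg star (k1 i)
  have k4 : ∀ i, v * star (u i) = u i * star (u i) := fun i => by
    simpa using congrArg star (k2 i)
  have k5 : ∀ i, v * star v * u i = u i := fun i => by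
    rw [mul_assoc, k3, ← mul_assoc, k4, hu]
  refine ⟨v, hv, ?_, k5, fun i => ?_⟩
  · ext ξ
    have s1 := (v * star v).hasSum (hv ξ)
    have : (fun i => (v * star v) (u i ξ)) = fun i => u i ξ := by
      ext i
      exact congrArg (fun x : H →L[ℂ] H => x ξ) (k5 i)
    rw [this] at s1
    exact s1.unique (hv ξ)
  · rw [← mul_assoc, k2, mul_assoc, k1, ← mul_assoc, hu]

/-- comparison of projections -/
lemma comparison (M : VonNeumannAlgebra H) {f g : H →L[ℂ] H} (hf : f ∈ M) (hfp : IsProjection f)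
    (hg : g ∈ M) (hgp : IsProjection g) :
    ∃ v ∈ M, ∃ z, v * star v * v = v ∧ v * f = v ∧ g * v = v ∧ IsCentralProjection M z ∧
      z * (f - star v * v) = f - star v * v ∧ z * (g - v * star v) = 0 := by
  let Q : Set (Set (H →L[ℂ] H)) := {S |
    (∀ u ∈ S, u ∈ M ∧ u * star u * u = u ∧ u * f = u ∧ g * u = u) ∧
    ∀ u ∈ S, ∀ u' ∈ S, u ≠ u' → star u * u' = 0 ∧ u * star u' = 0}
  obtain ⟨S, hS⟩ := zorn_subset Q (by
    intro c hc hchain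
    refine ⟨⋃₀ c, ⟨?_, ?_⟩, fun s hs => Set.subset_sUnion_of_mem hs⟩
    · rintro u ⟨s, hs, hu⟩
      exact (hc hs).1 u hu
    · rintro u ⟨s, hs, hu⟩ u' ⟨s', hs', hu'⟩ hne
      rcases hchain.total hs hs' with h | h
      · exact (hc hs').2 u (h hu) u' hu' hne
      · exact (hc hs).2 u hu u' (h hu') hne)
  have hSQ : S ∈ Q := hS.prop
  obtain ⟨v, hv, hvv, hvl, hvr⟩ := exists_sum' (fun i : S => (i : H →L[ℂ] H))
    (fun i => (hSQ.1 i i.2).2.1)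
    (fun i j hij => (hSQ.2 i i.2 j j.2 (fun h => hij (Subtype.ext h))).1)
    (fun i j hij => (hSQ.2 i i.2 j j.2 (fun h => hij (Subtype.ext h))).2)
  have hvM : v ∈ M := by
    apply mem_M_of_comm
    intro y hy
    ext ξ
    have s1 := y.hasSum (hv ξ)
    have s2 := hv (y ξ)
    have : (fun i : S => y ((i : H →L[ℂ] H) ξ)) = fun i : S => (i : H →L[ℂ] H) (y ξ) := by
      ext i
      exact congrArg (fun x : H →L[ℂ] H => x ξ) (comm_of_mem M (hSQ.1 i i.2).1 hy)
    rw [this] at s1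
    exact s1.unique s2
  have hvf : v * f = v := by
    ext ξ
    have s1 := hv (f ξ)
    have : (fun i : S => (i : H →L[ℂ] H) (f ξ)) = fun i : S => (i : H →L[ℂ] H) ξ := by
      ext i
      exact congrArg (fun x : H →L[ℂ] H => x ξ) (hSQ.1 i i.2).2.2.1
    rw [this] at s1
    exact s1.unique (hv ξ)
  have hgv : g * v = v := by
    ext ξ
    have s1 := g.hasSum (hv ξ)
    have : (fun i : S => g ((i : H →L[ℂ] H) ξ)) = fun i : S => (i : H →L[ℂ] H) ξ := by
      ext i
      exact congrArg (fun x : H →L[ℂ] H => x ξ) (hSQ.1 i i.2).2.2.2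
    rw [this] at s1
    exact s1.unique (hv ξ)
  have hfv : f * star v = star v := by simpa [hfp.2] using congrArg star hvf
  have hfP : IsProjection (f - star v * v) :=
    proj_sub hfp (pi_source hvv) (by rw [← mul_assoc, hfv])
  have hgP : IsProjection (g - v * star v) := by
    have := pi_source (pi_star hvv)
    rw [star_star] at this
    exact proj_sub hgp this (by rw [← mul_assoc, hgv])
  have hf'M : f - star v * v ∈ M := sub_mem hf (mul_mem (star_mem hvM) hvM)
  have hg'M : g - v * star v ∈ M := sub_mem hg (mul_mem hvM (star_mem hvM))
  have hgg : g * (g - v * star v) = g - v * star v := by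
    rw [mul_sub, hgp.1, ← mul_assoc, hgv]
  have hff : (f - star v * v) * f = f - star v * v := by
    rw [sub_mul, hfp.1, mul_assoc, hvf]
  have hzero : ∀ m ∈ M, (g - v * star v) * (m * (f - star v * v)) = 0 := by
    intro m hm
    by_contra hne
    obtain ⟨y, hyM, hy0, hyp, hyl, hyr⟩ :=
      exists_pi M (mul_mem hg'M (mul_mem hm hf'M)) hne
    have hy1 : (g - v * star v) * y = y := hyl _ (by rw [← mul_assoc, hgP.1])
    have hy2 : y * (f - star v * v) = y :=
      hyr _ hfP.2 (by rw [mul_assoc, mul_assoc, hfP.1])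
    have hy3 : g * y = y := by rw [← hy1, ← mul_assoc, hgg]
    have hy4 : y * f = y := by rw [← hy2, mul_assoc, hff]
    have hvy : star v * y = 0 := by
      have h5 := pi_star hvv
      rw [star_star] at h5
      have h6 : star v * g = star v := by simpa [hgp.2] using congrArg star hgv
      rw [← hy1, ← mul_assoc, mul_sub, h6, ← mul_assoc, h5, sub_self, zero_mul]
    have hyv : y * star v = 0 := by
      have h5 := pi_star hvv
      rw [star_star] at h5
      rw [← hy2, mul_assoc, sub_mul, hfv, h5, sub_self, mul_zero]
    have hvy' : star y * v = 0 := by simpa using congrArg star hvy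
    have hyv' : v * star y = 0 := by simpa using congrArg star hyv
    have o1 : ∀ u ∈ S, star u * y = 0 := by
      intro u hu
      have := congrArg star (hvl ⟨u, hu⟩)
      simp only [star_mul, star_star] at this
      rw [← this, mul_assoc, mul_assoc, hvy, mul_zero, mul_zero]
    have o2 : ∀ u ∈ S, u * star y = 0 := by
      intro u hu
      have := hvr ⟨u, hu⟩
      simp only at this
      rw [← this, mul_assoc, mul_assoc, hyv', mul_zero, mul_zero]
    have hins : insert y S ∈ Q := by
      refine ⟨?_, ?_⟩
      · rintro u (rfl | hu)
        · exact ⟨hyM, hyp, hy4, hy3⟩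
        · exact hSQ.1 u hu
      · rintro u (rfl | hu) u' (rfl | hu') hne
        · exact absurd rfl hne
        · exact ⟨by simpa using congrArg star (o1 u' hu'), by simpa using congrArg star (o2 u' hu')⟩
        · exact ⟨o1 u hu, o2 u hu⟩
        · exact hSQ.2 u hu u' hu' hne
    have hyS : y ∈ S := hS.le_of_ge hins (Set.subset_insert y S) (Set.mem_insert y S)
    apply hy0
    exact (CStarRing.star_mul_self_eq_zero_iff y).mp (o1 y hyS)
  obtain ⟨z, hz, hzT, hzK⟩ :=
    exists_supp {b : H →L[ℂ] H | ∃ m ∈ M, b = m * (f - star v * v)}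
  have hcM : ∀ y ∈ M, y * z = z * y := by
    intro y hy
    apply supp_comm hz hzK
    · rintro _ ⟨m, hm, rfl⟩
      exact hzT _ ⟨y * m, mul_mem hy hm, by rw [mul_assoc]⟩
    · rintro _ ⟨m, hm, rfl⟩
      exact hzT _ ⟨star y * m, mul_mem (star_mem hy) hm, by rw [mul_assoc]⟩
  have hcM' : ∀ y ∈ M.commutant, y * z = z * y := by
    have key : ∀ y ∈ M.commutant, ∀ b ∈ {b : H →L[ℂ] H | ∃ m ∈ M, b = m * (f - star v * v)},
        z * (y * b) = y * b := by
      rintro y hy b ⟨m, hm, rfl⟩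
      rw [comm_of_mem M (mul_mem hm hf'M) hy, ← mul_assoc, hzT _ ⟨m, hm, rfl⟩]
    intro y hy
    exact supp_comm hz hzK y (key y hy) (key _ (star_mem hy))
  refine ⟨v, hvM, z, hvv, hvf, hgv, ⟨hz, mem_M_of_comm M hcM', fun y hy => (hcM y hy).symm⟩,
    hzT _ ⟨1, one_mem M, by rw [one_mul]⟩, ?_⟩
  have : (g - v * star v) * z = 0 := by
    apply supp_kill hzK
    rintro _ ⟨m, hm, rfl⟩
    exact hzero m hm
  simpa [hz.2, hgp.2] using congrArg star this

lemma tau_mono {M : VonNeumannAlgebra H} {τ : (H →L[ℂ] H) → ENNReal} (hτ : IsFNSTrace M τ)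
    {x y : H →L[ℂ] H} (hx : x ∈ M) (hy : y ∈ M) (h0 : 0 ≤ x) (h : x ≤ y) : τ x ≤ τ y := by
  have := hτ.additive x (y - x) hx (sub_mem hy hx) h0 (sub_nonneg.mpr h)
  rw [add_sub_cancel] at this
  rw [this]
  exact le_self_add

/-- τ-finite projections are finite -/
lemma tau_finite_finite {M : VonNeumannAlgebra H} {τ : (H →L[ℂ] H) → ENNReal}
    (hτ : IsFNSTrace M τ) {p : H →L[ℂ] H} (hp : IsTauFiniteProjection M τ p) :
    IsFiniteProjection M p := by
  obtain ⟨hpM, hpp, hpt⟩ := hp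
  refine ⟨hpM, hpp, ?_⟩
  rintro q hqM hqp hpq ⟨v, hvM, hv1, hv2⟩
  have hpos := proj_nonneg (proj_sub hpp hqp hpq)
  have h1 := hτ.additive q (p - q) hqM (sub_mem hpM hqM) (proj_nonneg hqp) hpos
  rw [add_sub_cancel] at h1
  have h2 : τ q = τ p := by rw [← hv1, ← hv2]; exact hτ.tracial v hvM
  rw [h2] at h1
  have h3 : τ (p - q) = 0 := by
    have : τ p + 0 = τ p + τ (p - q) := by rw [add_zero]; exact h1
    exact ((ENNReal.add_right_inj hpt.ne).mp this).symm
  have := hτ.faithful _ (sub_mem hpM hqM) hpos h3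
  exact (sub_eq_zero.mp this).symm

/-- the range projection of `e q` -/
lemma supp_finite {M : VonNeumannAlgebra H} {τ : (H →L[ℂ] H) → ENNReal}
    (hτ : IsFNSTrace M τ) {e q : H →L[ℂ] H} (heM : e ∈ M) (he : IsProjection e)
    (hq : IsTauFiniteProjection M τ q) :
    ∃ r, IsTauFiniteProjection M τ r ∧ e * r = r ∧ r * (e * q) = e * q := by
  obtain ⟨hqM, hqp, hqt⟩ := hq
  set x := q * e with hx
  have hxM : x ∈ M := mul_mem hqM heM
  have hqx : q * x = x := by rw [hx, ← mul_assoc, hqp.1]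
  set a := star x * x with ha
  have haM : a ∈ M := mul_mem (star_mem hxM) hxM
  have hapos : 0 ≤ a := star_mul_self_nonneg x
  have hasa : star a = a := IsSelfAdjoint.star_mul_self x
  have hea : e * a = a := by
    have : star x = e * q := by rw [hx, star_mul, he.2, hqp.2]
    rw [ha, this, ← mul_assoc e (e * q) x, ← mul_assoc e e q, he.1]
  have hid : cfc (fun s : ℝ => s) a = a := cfc_id' ℝ a
  obtain ⟨r, hr, hra, hrK⟩ := exists_supp ({a} : Set (H →L[ℂ] H))
  have hra' : r * a = a := hra a rfl
  have hrM : r ∈ M := by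
    apply mem_M_of_comm
    intro y hy
    exact supp_comm' hr hra' hrK hasa y (comm_of_mem M haM hy)
  have her : e * r = r := by
    have : (1 - e) * r = 0 := by
      apply supp_kill hrK
      rintro _ rfl
      rw [sub_mul, one_mul, hea, sub_self]
    rw [sub_mul, one_mul, sub_eq_zero] at this
    exact this.symm
  have hreq : r * (e * q) = e * q := by
    have h1 : star (x * (1 - r)) * (x * (1 - r)) = 0 := by
      have : star (x * (1 - r)) * (x * (1 - r)) = (1 - r) * a * (1 - r) := by
        simp only [star_mul, star_sub, star_one, hr.2, ha, mul_assoc]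
      rw [this, sub_mul, one_mul, hra', sub_self, zero_mul]
    have h2 := congrArg star ((CStarRing.star_mul_self_eq_zero_iff _).mp h1)
    simp only [star_mul, star_sub, star_one, hr.2, hx, he.2, hqp.2, star_zero] at h2
    rw [sub_mul, one_mul, sub_eq_zero] at h2
    exact h2.symm
  refine ⟨r, ⟨hrM, hr, ?_⟩, her, hreq⟩
  have hden : ∀ (n : ℕ) (s : ℝ), 0 < 1 + (n : ℝ) * |s| := fun n s => by positivity
  let k : ℕ → ℝ → ℝ := fun n s => n / (1 + n * |s|)
  have hk0 : ∀ n s, 0 ≤ k n s := fun n s => by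
    have := hden n s
    simp only [k]; positivity
  have hkc : ∀ n, Continuous (k n) := by
    intro n
    apply Continuous.div
    · fun_prop
    · fun_prop
    · intro s; exact (hden n s).ne'
  let b : ℕ → (H →L[ℂ] H) := fun n => cfc (fun s => s * k n s) a
  have hspec : ∀ s ∈ spectrum ℝ a, 0 ≤ s := fun s hs => spectrum_nonneg_of_nonneg hapos hs
  have hbac : ∀ n, b n = a * cfc (k n) a := by
    intro n
    have := cfc_mul (fun s : ℝ => s) (k n) a (by fun_prop) (hkc n).continuousOn
    rw [hid] at this
    exact this
  have hbM : ∀ n, b n ∈ M := fun n => cfc_mem M haM _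
  have hb0 : ∀ n, 0 ≤ b n := fun n => cfc_nonneg fun s hs => mul_nonneg (hspec s hs) (hk0 n s)
  have hbsa : ∀ n, star (b n) = b n := fun n => (hb0 n).isSelfAdjoint
  have hb1 : ∀ n, b n ≤ 1 := fun n => cfc_le_one _ _ fun s hs => by
    have h0 := hspec s hs
    simp only [k]
    rw [abs_of_nonneg h0, ← mul_div_assoc, div_le_one (by positivity)]
    nlinarith
  have hrb : ∀ n, r * b n = b n := fun n => by rw [hbac, ← mul_assoc, hra']
  have hbr : ∀ n, b n * r = b n := fun n => by
    simpa [hr.2, hbsa n] using congrArg star (hrb n)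
  have hble : ∀ n, b n ≤ r := fun n => conj_le hr (hb1 n) (hrb n) (hbsa n)
  have hbnorm : ∀ n, ‖b n‖ ≤ 1 := fun n =>
    (CStarAlgebra.norm_le_one_iff_of_nonneg _ (hb0 n)).mpr (hb1 n)
  have hmono : Monotone b := by
    intro m n hmn
    refine cfc_mono ?_ (by have := hkc m; fun_prop) (by have := hkc n; fun_prop)
    intro s hs
    have h0 := hspec s hs
    have h1 : (m : ℝ) ≤ n := by exact_mod_cast hmn
    apply mul_le_mul_of_nonneg_left _ h0
    simp only [k]
    rw [abs_of_nonneg h0, div_le_div_iff₀ (by positivity) (by positivity)]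
    nlinarith
  have hτb : ∀ n, τ (b n) ≤ τ q := by
    intro n
    set s := cfc (fun t => Real.sqrt (k n t)) a with hs
    have hsc : Continuous (fun t => Real.sqrt (k n t)) := by have := hkc n; fun_prop
    have hssa : star s = s := (cfc_predicate (p := IsSelfAdjoint) (fun t => Real.sqrt (k n t)) a)
    have hsb : b n = star (x * s) * (x * s) := by
      have e1 : star (x * s) * (x * s) = s * a * s := by
        simp only [star_mul, hssa, ha, mul_assoc]
      have e2 : s * a * s = cfc (fun t => Real.sqrt (k n t) * t * Real.sqrt (k n t)) a := by
        rw [cfc_mul (fun t => Real.sqrt (k n t) * t) (fun t => Real.sqrt (k n t)) a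
          (by fun_prop) (by fun_prop),
          cfc_mul (fun t => Real.sqrt (k n t)) (fun t => t) a (by fun_prop) (by fun_prop), hid]
      rw [e1, e2]
      simp only [b]
      congr 1
      ext t
      have := Real.mul_self_sqrt (hk0 n t)
      linear_combination (-t) * this
    have hsM : x * s ∈ M := mul_mem hxM (cfc_mem M haM _)
    rw [hsb, hτ.tracial _ hsM]
    refine tau_mono hτ (mul_mem hsM (star_mem hsM)) hqM (mul_star_self_nonneg _) ?_
    apply conj_le hqp
    · rw [← CStarAlgebra.norm_le_one_iff_of_nonneg _ (mul_star_self_nonneg _)]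
      have := hbnorm n
      rw [hsb, CStarRing.norm_star_mul_self] at this
      rwa [CStarRing.norm_self_mul_star]
    · rw [← mul_assoc, ← mul_assoc, hqx]
    · simp
  have hlim : ∀ ξ, Tendsto (fun n => b n ξ) atTop (𝓝 (r ξ)) := by
    intro ξ
    have hmem : r ξ ∈ (LinearMap.range (a : H →ₗ[ℂ] H)).topologicalClosure := by
      apply hrK _ (Submodule.isClosed_topologicalClosure _)
      rintro _ rfl η
      exact Submodule.le_topologicalClosure _ ⟨η, rfl⟩
    have hbx : ∀ n, b n ξ = b n (r ξ) := fun n => by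
      conv_lhs => rw [← hbr n]
      rfl
    rw [Metric.tendsto_atTop]
    intro ε hε
    have hmem' : r ξ ∈ closure (Set.range a) := by
      have := hmem
      rw [← SetLike.mem_coe, Submodule.topologicalClosure_coe] at this
      exact this
    obtain ⟨_, ⟨η, rfl⟩, hη⟩ := Metric.mem_closure_iff.mp hmem' (ε / 2) (by positivity)
    obtain ⟨N, hN⟩ := exists_nat_gt (2 * ‖η‖ / ε)
    refine ⟨N + 1, fun n hn => ?_⟩
    have hnpos : (0 : ℝ) < n := by
      have : 0 < n := by omega
      exact_mod_cast this
    have hNn : 2 * ‖η‖ / ε < n := lt_of_lt_of_le hN (by exact_mod_cast (by omega : N ≤ n))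
    have hba : ‖(1 - b n) * a‖ ≤ 1 / n := by
      have e : (1 - b n) * a = cfc (fun s => (1 - s * k n s) * s) a := by
        rw [cfc_mul (fun s => 1 - s * k n s) (fun s => s) a
          (by have := hkc n; fun_prop) (by fun_prop), hid,
          cfc_sub (fun _ => (1 : ℝ)) (fun s => s * k n s) a
          (by fun_prop) (by have := hkc n; fun_prop), cfc_const_one ℝ a]
      rw [e]
      apply norm_cfc_le (by positivity)
      intro s hs
      have h0 := hspec s hs
      have h1 := hden n s
      simp only [k]
      rw [abs_of_nonneg h0] at *
      have : (1 - s * (n / (1 + n * s))) * s = s / (1 + n * s) := by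
        field_simp
        ring
      rw [this, Real.norm_of_nonneg (by positivity), div_le_div_iff₀ h1 hnpos]
      nlinarith
    have h1b : ‖1 - b n‖ ≤ 1 :=
      (CStarAlgebra.norm_le_one_iff_of_nonneg _ (sub_nonneg.mpr (hb1 n))).mpr
        (by simpa using hb0 n)
    have hsplit : b n ξ - r ξ = -((1 - b n) (r ξ - a η) + ((1 - b n) * a) η) := by
      rw [hbx]
      simp
      abel
    rw [dist_eq_norm, hsplit, norm_neg]
    have i1 : ‖(1 - b n) (r ξ - a η)‖ ≤ 1 * ‖r ξ - a η‖ :=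
      ContinuousLinearMap.le_of_opNorm_le _ h1b _
    have i2 : ‖((1 - b n) * a) η‖ ≤ 1 / n * ‖η‖ :=
      ContinuousLinearMap.le_of_opNorm_le _ hba _
    have i3 : 1 / n * ‖η‖ < ε / 2 := by
      rw [div_lt_iff₀ hε] at hNn
      rw [one_div, inv_mul_lt_iff₀ hnpos]
      linarith
    rw [dist_eq_norm] at hη
    have := norm_add_le ((1 - b n) (r ξ - a η)) (((1 - b n) * a) η)
    linarith
  have hlub : IsLUB (Set.range (fun i : ULift ℕ => b i.down)) r := by
    constructor
    · rintro _ ⟨i, rfl⟩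
      exact hble _
    · intro y hy
      have hy' : ∀ n, b n ≤ y := fun n => hy ⟨⟨n⟩, rfl⟩
      have hysa : star y = y := ((hb0 0).trans (hy' 0)).isSelfAdjoint
      rw [ContinuousLinearMap.le_def, ContinuousLinearMap.isPositive_def']
      refine ⟨by rw [IsSelfAdjoint, star_sub, hysa, hr.2], fun ξ => ?_⟩
      have t1 : Tendsto (fun n => (y - b n).reApplyInnerSelf ξ) atTop
          (𝓝 ((y - r).reApplyInnerSelf ξ)) := by
        simp only [ContinuousLinearMap.reApplyInnerSelf_apply, sub_apply]
        have := ((tendsto_const_nhds (x := y ξ)).sub (hlim ξ)).inner (𝕜 := ℂ)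
          (tendsto_const_nhds (x := ξ))
        exact (RCLike.continuous_re.tendsto _).comp this
      refine ge_of_tendsto t1 (Filter.Eventually.of_forall fun n => ?_)
      have := hy' n
      rw [ContinuousLinearMap.le_def, ContinuousLinearMap.isPositive_def'] at this
      exact this.2 ξ
  have := hτ.normal (ULift ℕ) (fun i => b i.down) r (fun i => hbM _) (fun i => hb0 _)
    (fun i j hij => hmono hij) ⟨1, fun i => hbnorm _⟩ hrM hlub
  rw [this]
  exact lt_of_le_of_lt (iSup_le fun i => hτb i.down) hqt

lemma center_sub_WZ {M : VonNeumannAlgebra H} {S : Set (H →L[ℂ] H)} {z : H →L[ℂ] H}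
    (hz : z ∈ centerSet M) : z ∈ WZstar M S := by
  intro y hy
  exact (hy z (Or.inr hz)).symm

lemma WZ_mul {M : VonNeumannAlgebra H} {S : Set (H →L[ℂ] H)} {x y : H →L[ℂ] H}
    (hx : x ∈ WZstar M S) (hy : y ∈ WZstar M S) : x * y ∈ WZstar M S :=
  Set.mul_mem_centralizer hx hy

lemma WZ_one_sub {M : VonNeumannAlgebra H} {S : Set (H →L[ℂ] H)} {x : H →L[ℂ] H}
    (hx : x ∈ WZstar M S) : 1 - x ∈ WZstar M S := by
  intro y hy
  rw [mul_sub, sub_mul, hx y hy, mul_one, one_mul]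

lemma WZ_mem {M : VonNeumannAlgebra H} {S : Set (H →L[ℂ] H)} (hS : ∀ s ∈ S, s ∈ M)
    {x : H →L[ℂ] H} (hx : x ∈ WZstar M S) : x ∈ M := by
  apply mem_M_of_comm
  intro y hy
  apply hx y
  rintro s (hs | hs)
  · exact (comm_of_mem M (hS s hs) hy).symm
  · exact (comm_of_mem M hs.1 hy).symm

lemma WZ_comm {M : VonNeumannAlgebra H} {S : Set (H →L[ℂ] H)} (hS : ∀ s ∈ S, s ∈ M)
    (hc : ∀ s ∈ S, ∀ t ∈ S, s * t = t * s)
    {x y : H →L[ℂ] H} (hx : x ∈ WZstar M S) (hy : y ∈ WZstar M S) : x * y = y * x := by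
  refine (hx y ?_).symm
  intro s hs
  symm
  apply (hy s _).symm
  intro t ht
  rcases hs with hs | hs
  · rcases ht with ht | ht
    · exact hc t ht s hs
    · exact ht.2 s (hS s hs)
  · rcases ht with ht | ht
    · exact (hs.2 t (hS t ht)).symm
    · exact (hs.2 t ht.1).symm

/-- a τ-finite subprojection of `e ∈ WZ*` is equivalent to a subprojection of `e`
orthogonal to `q`. -/
lemma lemmaD {M : VonNeumannAlgebra H} {τ : (H →L[ℂ] H) → ENNReal}
    (hτ : IsFNSTrace M τ) {S : Set (H →L[ℂ] H)} (hS : ∀ s ∈ S, s ∈ M)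
    (htriv : ∀ x ∈ WZstar M S, IsFiniteProjection M x → x = 0)
    {e f q : H →L[ℂ] H} (heA : e ∈ WZstar M S) (he : IsProjection e)
    (hf : IsTauFiniteProjection M τ f) (hef : e * f = f)
    (hq : IsTauFiniteProjection M τ q) :
    ∃ v ∈ M, star v * v = f ∧ e * v = v ∧ q * v = 0 := by
  have heM := WZ_mem hS heA
  obtain ⟨r, ⟨hrM, hrp, hrt⟩, her, hreq⟩ := supp_finite hτ heM he hq
  obtain ⟨hfM, hfp, hft⟩ := hf
  obtain ⟨hqM, hqp, hqt⟩ := hq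
  have hgp := proj_sub he hrp her
  have hgM : e - r ∈ M := sub_mem heM hrM
  have hqg : q * (e - r) = 0 := by
    have h1 := congrArg star hreq
    simp only [star_mul, he.2, hqp.2, hrp.2] at h1
    rw [mul_assoc, her] at h1
    rw [mul_sub, h1, sub_self]
  obtain ⟨v, hvM, z, hvv, hvf, hgv, hz, hzf, hzg⟩ := comparison M hfM hfp hgM hgp
  have hze : z * e = 0 := by
    apply htriv _ (WZ_mul (center_sub_WZ hz.2) heA)
    apply tau_finite_finite hτ
    have hzM := hz.2.1
    have hzp := hz.1
    refine ⟨mul_mem hzM heM, proj_mul hzp he (hz.2.2 e heM), ?_⟩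
    have hsplit : z * e = (z * v) * star (z * v) + z * r := by
      have e1 : (z * v) * star (z * v) = z * (v * star v) := by
        rw [star_mul, hzp.2]
        have : z * v * (star v * z) = z * (v * star v * z) := by simp only [mul_assoc]
        rw [this, ← hz.2.2 _ (mul_mem hvM (star_mem hvM)), ← mul_assoc, hzp.1]
      rw [mul_sub, sub_eq_zero] at hzg
      rw [e1, ← hzg, mul_sub, sub_add_cancel]
    have hzvM : z * v ∈ M := mul_mem hzM hvM
    have hzr := proj_mul hzp hrp (hz.2.2 r hrM)
    rw [hsplit, hτ.additive _ _ (mul_mem hzvM (star_mem hzvM)) (mul_mem hzM hrM)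
      (mul_star_self_nonneg _) (proj_nonneg hzr)]
    apply ENNReal.add_lt_top.mpr
    constructor
    · rw [← hτ.tracial _ hzvM]
      refine lt_of_le_of_lt (tau_mono hτ (mul_mem (star_mem hzvM) hzvM) hfM
        (star_mul_self_nonneg _) ?_) hft
      have e2 : star (z * v) * (z * v) = star v * z * v := by
        rw [star_mul, hzp.2]
        have : star v * z * (z * v) = star v * (z * z) * v := by simp only [mul_assoc]
        rw [this, hzp.1]
      have e3 := star_left_conjugate_le_conjugate (proj_le_one hzp) v
      have e4 : star v * v ≤ f := by
        refine conj_le hfp (proj_le_one (pi_source hvv)) ?_ (by simp)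
        have hfv : f * star v = star v := by simpa [hfp.2] using congrArg star hvf
        rw [← mul_assoc, hfv]
      rw [e2]
      refine e3.trans ?_
      rwa [mul_one]
    · refine lt_of_le_of_lt (tau_mono hτ (mul_mem hzM hrM) hrM (proj_nonneg hzr) ?_) hrt
      refine conj_le hrp (proj_le_one hzr) ?_ hzr.2
      rw [hz.2.2 r hrM, ← mul_assoc, hrp.1]
  refine ⟨v, hvM, ?_, ?_, ?_⟩
  · have hfv : f * star v = star v := by simpa [hfp.2] using congrArg star hvf
    have h1 : e * (f - star v * v) = f - star v * v := by
      have : e * star v = star v := by rw [← hfv, ← mul_assoc, hef]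
      rw [mul_sub, hef, ← mul_assoc, this]
    rw [← h1, ← mul_assoc, hze, zero_mul, h1] at hzf
    exact (sub_eq_zero.mp hzf.symm).symm
  · have : e * (e - r) = e - r := by rw [mul_sub, he.1, her]
    rw [← hgv, ← mul_assoc, this]
  · rw [← hgv, ← mul_assoc, hqg, zero_mul]

/-- spectral projections -/
lemma exists_spectral (a : H →L[ℂ] H) (ha : star a = a) (t : ℝ) :
    ∃ P : H →L[ℂ] H, IsProjection P ∧ (∀ y, y * a = a * y → y * P = P * y) ∧
      0 ≤ (a - algebraMap ℝ _ t) * P ∧ (a - algebraMap ℝ _ t) * (1 - P) ≤ 0 := by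
  have hasa : IsSelfAdjoint a := ha
  have hid : cfc (fun s : ℝ => s) a = a := cfc_id' ℝ a
  set d := cfc (fun s : ℝ => max (s - t) 0) a with hd
  set d' := cfc (fun s : ℝ => max (t - s) 0) a with hd'
  have hdpos : 0 ≤ d := cfc_nonneg fun s _ => le_max_right _ _
  have hdpos' : 0 ≤ d' := cfc_nonneg fun s _ => le_max_right _ _
  have hdsa : star d = d := hdpos.isSelfAdjoint
  have hsub : a - algebraMap ℝ _ t = d - d' := by
    rw [hd, hd', ← cfc_sub _ _ a (by fun_prop) (by fun_prop)]
    conv_lhs => rw [← hid, ← cfc_const t a, ← cfc_sub _ _ a (by fun_prop) (by fun_prop)]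
    congr 1
    ext s
    rcases le_total s t with h | h
    · rw [max_eq_right (a := s - t) (by linarith), max_eq_left (by linarith)]; ring
    · rw [max_eq_left (by linarith), max_eq_right (by linarith)]; ring
  have hdd : d' * d = 0 := by
    rw [hd, hd', ← cfc_mul _ _ a (by fun_prop) (by fun_prop)]
    rw [← cfc_zero ℝ a]
    congr 1
    ext s
    rcases le_total s t with h | h
    · rw [max_eq_right (a := s - t) (by linarith)]; simp
    · rw [max_eq_right (a := t - s) (by linarith)]; simp
  obtain ⟨P, hP, hPd, hPK⟩ := exists_supp ({d} : Set (H →L[ℂ] H))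
  have hPd' : P * d = d := hPd d rfl
  have hdP : d * P = d := by simpa [hP.2, hdsa] using congrArg star hPd'
  have hd'P : d' * P = 0 := supp_kill hPK _ (by rintro _ rfl; exact hdd)
  refine ⟨P, hP, ?_, ?_, ?_⟩
  · intro y hy
    apply supp_comm' hP hPd' hPK hdsa
    have : Commute a y := hy.symm
    exact (this.cfc_real _).symm
  · rw [hsub, sub_mul, hdP, hd'P, sub_zero]
    exact hdpos
  · rw [hsub, mul_sub, mul_one, sub_mul, hdP, hd'P, sub_zero, sub_sub_cancel_left]
    simpa using hdpos'

/-- atoms of a finite Boolean algebra of projections -/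
lemma exists_atoms {A : Set (H →L[ℂ] H)} (hmul : ∀ x ∈ A, ∀ y ∈ A, x * y ∈ A)
    (hsub : ∀ x ∈ A, 1 - x ∈ A) (hone : 1 ∈ A) (hcomm : ∀ x ∈ A, ∀ y ∈ A, x * y = y * x)
    {T : Set (H →L[ℂ] H)} (hT : T.Finite) (hTA : ∀ P ∈ T, P ∈ A ∧ IsProjection P) :
    ∃ (ι : Type) (_ : Fintype ι) (e : ι → (H →L[ℂ] H)),
      (∀ i, e i ∈ A ∧ IsProjection (e i)) ∧ (∀ i j, i ≠ j → e i * e j = 0) ∧ ∑ i, e i = 1 ∧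
      ∀ i, ∀ P ∈ T, P * e i = e i ∨ (1 - P) * e i = e i := by
  induction T, hT using Set.Finite.induction_on with
  | empty =>
    refine ⟨Unit, inferInstance, fun _ => 1, fun _ => ⟨hone, by simp [IsProjection]⟩, ?_, by simp,
      by simp⟩
    intro i j h
    exact absurd (Subsingleton.elim i j) h
  | @insert P T hP hTf ih =>
    obtain ⟨ι, _, e, he, horth, hsum, hat⟩ := ih (fun Q hQ => hTA Q (Set.mem_insert_of_mem _ hQ))
    obtain ⟨hPA, hPp⟩ := hTA P (Set.mem_insert _ _)
    have hPp' := proj_one_sub hPp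
    have hPA' := hsub P hPA
    have hPP : P * (1 - P) = 0 := by rw [mul_sub, mul_one, hPp.1, sub_self]
    have hPP' : (1 - P) * P = 0 := by rw [sub_mul, one_mul, hPp.1, sub_self]
    have key : ∀ Q R, Q ∈ A → R ∈ A → ∀ i j, (i ≠ j ∨ Q * R = 0) →
        (Q * e i) * (R * e j) = 0 := by
      intro Q R hQ hR i j h
      have : (Q * e i) * (R * e j) = (Q * R) * (e i * e j) := by
        have e1 : (Q * e i) * (R * e j) = Q * (e i * R) * e j := by simp only [mul_assoc]
        rw [e1, hcomm _ (he i).1 R hR]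
        simp only [mul_assoc]
      rw [this]
      rcases h with h | h
      · rw [horth i j h, mul_zero]
      · rw [h, zero_mul]
    refine ⟨ι ⊕ ι, inferInstance, Sum.elim (fun i => P * e i) (fun i => (1 - P) * e i),
      ?_, ?_, ?_, ?_⟩
    · rintro (i | i)
      · exact ⟨hmul _ hPA _ (he i).1, proj_mul hPp (he i).2 (hcomm _ hPA _ (he i).1)⟩
      · exact ⟨hmul _ hPA' _ (he i).1, proj_mul hPp' (he i).2 (hcomm _ hPA' _ (he i).1)⟩
    · rintro (i | i) (j | j) hij
      · exact key _ _ hPA hPA i j (Or.inl (fun h => hij (by rw [h])))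
      · exact key _ _ hPA hPA' i j (Or.inr hPP)
      · exact key _ _ hPA' hPA i j (Or.inr hPP')
      · exact key _ _ hPA' hPA' i j (Or.inl (fun h => hij (by rw [h])))
    · simp only [Fintype.sum_sum_type, Sum.elim_inl, Sum.elim_inr, ← Finset.mul_sum, hsum]
      simp
    · have sw : ∀ Q R, Q ∈ A → R ∈ A → ∀ i, Q * e i = e i → Q * (R * e i) = R * e i := by
        intro Q R hQ hR i h
        rw [← mul_assoc, hcomm Q hQ R hR, mul_assoc, h]
      rintro (i | i) Q (rfl | hQ)
      · left; simp only [Sum.elim_inl]; rw [← mul_assoc, hPp.1]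
      · have hQA := (hTA Q (Set.mem_insert_of_mem _ hQ)).1
        exact (hat i Q hQ).imp (sw _ _ hQA hPA i) (sw _ _ (hsub _ hQA) hPA i)
      · right; simp only [Sum.elim_inr]; rw [← mul_assoc, hPp'.1]
      · have hQA := (hTA Q (Set.mem_insert_of_mem _ hQ)).1
        exact (hat i Q hQ).imp (sw _ _ hQA hPA' i) (sw _ _ (hsub _ hQA) hPA' i)

lemma block_norm {ι : Type} [Fintype ι] {e : ι → (H →L[ℂ] H)} (he : ∀ i, IsProjection (e i))
    (hsum : ∑ i, e i = 1) (X : H →L[ℂ] H) (hX : ∀ i, X * e i = e i * X) {c : ℝ} (hc : 0 ≤ c)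
    (hn : ∀ i, ‖X * e i‖ ≤ c) : ‖X‖ ≤ c := by
  have h1 : star X * X = ∑ i, star (X * e i) * (X * e i) := by
    calc star X * X = star X * X * ∑ i, e i := by rw [hsum, mul_one]
      _ = ∑ i, star (X * e i) * (X * e i) := by
        rw [Finset.mul_sum]
        refine Finset.sum_congr rfl fun i _ => ?_
        have : X * e i = e i * (X * e i) := by rw [hX, ← mul_assoc, (he i).1]
        rw [mul_assoc, this, hX]
        simp only [star_mul, (he i).2, mul_assoc]
        simp only [← mul_assoc (e i) (e i), (he i).1]
  have h2 : ∀ i, star (X * e i) * (X * e i) ≤ c ^ 2 • e i := by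
    intro i
    have h3 : star (X * e i) * (X * e i) ≤ algebraMap ℝ _ (c ^ 2) := by
      rw [← CStarAlgebra.norm_le_iff_le_algebraMap _ (by positivity) (star_mul_self_nonneg _),
        CStarRing.norm_star_mul_self, ← sq]
      have := hn i
      gcongr
    have h4 := star_left_conjugate_le_conjugate h3 (e i)
    have h5 : star (e i) * (star (X * e i) * (X * e i)) * e i = star (X * e i) * (X * e i) := by
      have : X * e i * e i = X * e i := by rw [mul_assoc, (he i).1]
      calc _ = star (X * e i * e i) * (X * e i * e i) := by simp only [star_mul, mul_assoc]
        _ = _ := by rw [this]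
    rw [h5] at h4
    refine h4.trans (le_of_eq ?_)
    rw [Algebra.algebraMap_eq_smul_one, mul_smul_comm, mul_one, smul_mul_assoc, (he i).2, (he i).1]
  have h6 : star X * X ≤ algebraMap ℝ _ (c ^ 2) := by
    rw [h1]
    refine (Finset.sum_le_sum fun i _ => h2 i).trans (le_of_eq ?_)
    rw [← Finset.smul_sum, hsum, Algebra.algebraMap_eq_smul_one]
  rw [← CStarAlgebra.norm_le_iff_le_algebraMap _ (by positivity) (star_mul_self_nonneg _),
    CStarRing.norm_star_mul_self] at h6
  nlinarith [norm_nonneg X]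

lemma exists_partition {M : VonNeumannAlgebra H} {n : ℕ} {α : Fin n → (H →L[ℂ] H)}
    (hα : IsCommutingSelfAdjointTuple M α) {δ : ℝ} (hδ : 0 < δ) :
    ∃ (ι : Type) (_ : Fintype ι) (e : ι → (H →L[ℂ] H)),
      (∀ i, e i ∈ WZstar M (Set.range α) ∧ IsProjection (e i)) ∧
      (∀ i j, i ≠ j → e i * e j = 0) ∧ ∑ i, e i = 1 ∧
      (∀ i j, α j * e i = e i * α j) ∧
      ∀ i j, ∃ t : ℝ, ‖(α j - algebraMap ℝ _ t) * e i‖ ≤ δ := by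
  obtain ⟨hαM, hαs, hαc⟩ := hα
  have hSM : ∀ s ∈ Set.range α, s ∈ M := by rintro _ ⟨j, rfl⟩; exact hαM j
  have hSc : ∀ s ∈ Set.range α, ∀ t ∈ Set.range α, s * t = t * s := by
    rintro _ ⟨i, rfl⟩ _ ⟨j, rfl⟩; exact hαc i j
  have hαA : ∀ j, α j ∈ WZstar M (Set.range α) := by
    intro j y hy
    exact (hy (α j) (Or.inl ⟨j, rfl⟩)).symm
  set C : ℝ := ∑ j, ‖α j‖ with hC
  have hCj : ∀ j, ‖α j‖ ≤ C := fun j =>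
    Finset.single_le_sum (f := fun j => ‖α j‖) (fun i _ => norm_nonneg _) (Finset.mem_univ j)
  obtain ⟨N, hN⟩ := exists_nat_gt (2 * C / δ)
  rw [div_lt_iff₀ hδ] at hN
  let t : ℕ → ℝ := fun k => -C + k * δ
  choose P hPp hPc hP0 hP1 using fun (jk : Fin n × Fin (N + 1)) =>
    exists_spectral (α jk.1) (hαs jk.1) (t jk.2)
  obtain ⟨ι, inst, e, he, horth, hsum, hat⟩ :=
    exists_atoms (A := WZstar M (Set.range α)) (fun x hx y hy => WZ_mul hx hy)
      (fun x hx => WZ_one_sub hx) (fun y _ => by rw [mul_one, one_mul])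
      (fun x hx y hy => WZ_comm hSM hSc hx hy) (T := Set.range P) (Set.finite_range P) (by
        rintro _ ⟨jk, rfl⟩
        refine ⟨?_, hPp jk⟩
        intro y hy
        exact hPc jk y (hy _ (Or.inl ⟨jk.1, rfl⟩)).symm)
  have hcomm : ∀ i j, α j * e i = e i * α j := fun i j => WZ_comm hSM hSc (hαA j) (he i).1
  refine ⟨ι, inst, e, he, horth, hsum, hcomm, ?_⟩
  intro i j
  obtain ⟨heA, hep⟩ := he i
  have hbc : ∀ s : ℝ, (α j - algebraMap ℝ _ s) * e i = e i * (α j - algebraMap ℝ _ s) := by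
    intro s
    rw [sub_mul, mul_sub, hcomm, Algebra.commutes]
  have hconj : ∀ (s : ℝ) (c : H →L[ℂ] H), c * e i = (α j - algebraMap ℝ _ s) * e i →
      star (e i) * c * e i = (α j - algebraMap ℝ _ s) * e i := by
    intro s c h
    rw [mul_assoc, h, hep.2, hbc, ← mul_assoc, hep.1]
  have hpos : ∀ (s : ℝ) (c : H →L[ℂ] H), c * e i = (α j - algebraMap ℝ _ s) * e i → 0 ≤ c →
      0 ≤ (α j - algebraMap ℝ _ s) * e i := by
    intro s c h h0
    rw [← hconj s c h]
    simpa using star_left_conjugate_le_conjugate h0 (e i)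
  have hneg : ∀ (s : ℝ) (c : H →L[ℂ] H), c * e i = (α j - algebraMap ℝ _ s) * e i → c ≤ 0 →
      (α j - algebraMap ℝ _ s) * e i ≤ 0 := by
    intro s c h h0
    rw [← hconj s c h]
    simpa using star_left_conjugate_le_conjugate h0 (e i)
  have hsa : IsSelfAdjoint (α j) := hαs j
  have hup : α j ≤ algebraMap ℝ _ C := hsa.le_algebraMap_norm_self.trans
    (algebraMap_mono (H →L[ℂ] H) (hCj j))
  have hlo : -algebraMap ℝ _ C ≤ α j := (neg_le_neg (algebraMap_mono (H →L[ℂ] H) (hCj j))).trans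
    hsa.neg_algebraMap_norm_le_self
  have hQ0 : 0 ≤ (α j - algebraMap ℝ _ (t 0)) * e i := by
    refine hpos _ _ rfl ?_
    have : t 0 = -C := by simp [t]
    rw [this, map_neg]
    exact sub_nonneg.mpr hlo
  have hRN : (α j - algebraMap ℝ _ (t (N + 1))) * e i ≤ 0 := by
    refine hneg _ _ rfl ?_
    have : C ≤ t (N + 1) := by simp only [t]; push_cast; linarith
    exact sub_nonpos.mpr (hup.trans (algebraMap_mono (H →L[ℂ] H) this))
  have hdich : ∀ k ≤ N, 0 ≤ (α j - algebraMap ℝ _ (t k)) * e i ∨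
      (α j - algebraMap ℝ _ (t k)) * e i ≤ 0 := by
    intro k hk
    let jk : Fin n × Fin (N + 1) := (j, ⟨k, by omega⟩)
    rcases hat i (P jk) ⟨jk, rfl⟩ with h | h
    · left
      exact hpos _ _ (by rw [mul_assoc, h]) (hP0 jk)
    · right
      exact hneg _ _ (by rw [mul_assoc, h]) (hP1 jk)
  have hex : ∃ k, 0 ≤ (α j - algebraMap ℝ _ (t k)) * e i ∧
      (α j - algebraMap ℝ _ (t (k + 1))) * e i ≤ 0 := by
    by_contra hno
    push Not at hno
    have : ∀ k ≤ N, 0 ≤ (α j - algebraMap ℝ _ (t k)) * e i := by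
      intro k
      induction k with
      | zero => intro _; exact hQ0
      | succ k ih =>
        intro hk
        rcases hdich (k + 1) hk with h | h
        · exact h
        · exact absurd h (hno k (ih (by omega)))
    exact hno N (this N le_rfl) hRN
  obtain ⟨k, hk0, hk1⟩ := hex
  refine ⟨t k, ?_⟩
  rw [CStarAlgebra.norm_le_iff_le_algebraMap _ hδ.le hk0]
  have e1 : (α j - algebraMap ℝ _ (t k)) * e i =
      (α j - algebraMap ℝ _ (t (k + 1))) * e i + δ • e i := by
    have : t k = t (k + 1) - δ := by simp only [t]; push_cast; ring
    rw [this, map_sub, Algebra.smul_def]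
    simp only [sub_mul]
    abel
  rw [e1]
  calc _ ≤ 0 + δ • e i := by gcongr
    _ = δ • e i := zero_add _
    _ ≤ δ • (1 : H →L[ℂ] H) := smul_le_smul_of_nonneg_left (proj_le_one hep) hδ.le
    _ = _ := (Algebra.algebraMap_eq_smul_one δ).symm

lemma le_commNorm {n : ℕ} (α : Fin n → (H →L[ℂ] H)) (r : H →L[ℂ] H) (j : Fin n) :
    ‖r * α j - α j * r‖ ≤ commNorm α r :=
  le_ciSup (f := fun j => ‖r * α j - α j * r‖) (Set.finite_range _).bddAbove j

lemma single_step {M : VonNeumannAlgebra H} {τ : (H →L[ℂ] H) → ENNReal} (hτ : IsFNSTrace M τ)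
    {n : ℕ} (hn : 0 < n) {α : Fin n → (H →L[ℂ] H)} (hα : IsCommutingSelfAdjointTuple M α)
    (htriv : ∀ x ∈ WZstar M (Set.range α), IsFiniteProjection M x → x = 0)
    {p q : H →L[ℂ] H} (hp : IsTauFiniteProjection M τ p) (hq : IsTauFiniteProjection M τ q)
    {ε : ℝ} (hε : 0 < ε) :
    ∃ w ∈ M, star w * w = p ∧ q * w = 0 ∧ commNorm α w ≤ ε + commNorm α p := by
  have hSM : ∀ s ∈ Set.range α, s ∈ M := by rintro _ ⟨j, rfl⟩; exact hα.1 j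
  obtain ⟨ι, inst, e, he, horth, hsum, hcomm, hosc⟩ := exists_partition hα (half_pos hε)
  choose f hf hef hfep using fun i => supp_finite hτ (WZ_mem hSM (he i).1) (he i).2 hp
  choose v hvM hvf hev hqv using fun i =>
    lemmaD hτ hSM htriv (he i).1 (he i).2 (hf i) (hef i) hq
  have hfe : ∀ i, f i * e i = f i := fun i => by
    simpa [(he i).2.2, (hf i).2.1.2] using congrArg star (hef i)
  have hve : ∀ i, v i * e i = v i := fun i => by
    have := pi_of_source (hf i).2.1 (hvf i)
    rw [← this, mul_assoc, hfe]
  set V := ∑ i, v i with hV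
  have hVe : ∀ i, V * e i = v i := by
    intro i
    rw [hV, Finset.sum_mul, Finset.sum_eq_single i]
    · exact hve i
    · intro j _ hj
      rw [← hve j, mul_assoc, horth j i hj, mul_zero]
    · simp
  have heV : ∀ i, e i * V = v i := by
    intro i
    rw [hV, Finset.mul_sum, Finset.sum_eq_single i]
    · exact hev i
    · intro j _ hj
      rw [← hev j, ← mul_assoc, horth i j hj.symm, zero_mul]
    · simp
  have hVc : ∀ i, V * e i = e i * V := fun i => (hVe i).trans (heV i).symm
  have hVV : star V * V = ∑ i, f i := by
    rw [hV, star_sum, Finset.sum_mul]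
    refine Finset.sum_congr rfl fun i _ => ?_
    have : star (v i) = star (v i) * e i := by
      have := congrArg star (hev i)
      rw [star_mul, (he i).2.2] at this
      exact this.symm
    rw [this, mul_assoc, heV, hvf]
  have hFp : IsProjection (∑ i, f i) := by
    refine ⟨?_, by rw [star_sum]; exact Finset.sum_congr rfl fun i _ => (hf i).2.1.2⟩
    rw [Finset.sum_mul]
    refine Finset.sum_congr rfl fun i _ => ?_
    rw [Finset.mul_sum, Finset.sum_eq_single i]
    · exact (hf i).2.1.1
    · intro j _ hj
      rw [← hfe i, ← hef j, mul_assoc, ← mul_assoc (e i), horth i j hj.symm, zero_mul, mul_zero]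
    · simp
  have hVn : ‖V‖ ≤ 1 := norm_le_one_of_proj hFp hVV
  have hFpp : (∑ i, f i) * p = p := by
    calc (∑ i, f i) * p = ∑ i, e i * p := by
          rw [Finset.sum_mul]
          refine Finset.sum_congr rfl fun i _ => ?_
          rw [← hfep i, ← mul_assoc (f i), hfe]
      _ = p := by rw [← Finset.sum_mul, hsum, one_mul]
  have hVM : V ∈ M := sum_mem fun i _ => hvM i
  refine ⟨V * p, mul_mem hVM hp.1, ?_, ?_, ?_⟩
  · rw [star_mul, hp.2.1.2]
    calc p * star V * (V * p) = p * ((star V * V) * p) := by simp only [mul_assoc]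
      _ = p := by rw [hVV, hFpp, hp.2.1.1]
  · rw [← mul_assoc, hV, Finset.mul_sum, Finset.sum_eq_zero (fun i _ => hqv i), zero_mul]
  · have : Nonempty (Fin n) := ⟨⟨0, hn⟩⟩
    refine ciSup_le fun j => ?_
    have hX : ‖V * α j - α j * V‖ ≤ ε := by
      refine block_norm (fun i => (he i).2) hsum _ ?_ hε.le ?_
      · intro i
        rw [sub_mul, mul_sub, mul_assoc, hcomm, ← mul_assoc, hVc, mul_assoc,
          mul_assoc (α j), hVc, ← mul_assoc (α j), hcomm, mul_assoc]
      · intro i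
        obtain ⟨t, ht⟩ := hosc i j
        have e1 : (V * α j - α j * V) * e i =
            V * ((α j - algebraMap ℝ _ t) * e i) - ((α j - algebraMap ℝ _ t) * e i) * V := by
          rw [mul_assoc _ (e i) V, ← hVc]
          have := Algebra.commutes t V
          simp only [sub_mul, mul_sub, ← mul_assoc, this]
          abel
        rw [e1]
        have n1 : ‖V * ((α j - algebraMap ℝ _ t) * e i)‖ ≤ 1 * (ε / 2) :=
          (norm_mul_le _ _).trans (by gcongr)
        have n2 : ‖((α j - algebraMap ℝ _ t) * e i) * V‖ ≤ (ε / 2) * 1 :=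
          (norm_mul_le _ _).trans (by gcongr)
        have := norm_sub_le (V * ((α j - algebraMap ℝ _ t) * e i))
          (((α j - algebraMap ℝ _ t) * e i) * V)
        linarith
    have hpn : ‖p‖ ≤ 1 := norm_le_one_of_proj hp.2.1 (by rw [hp.2.1.2, hp.2.1.1])
    have e2 : V * p * α j - α j * (V * p) =
        (V * α j - α j * V) * p + V * (p * α j - α j * p) := by
      simp only [sub_mul, mul_sub, mul_assoc]
      abel
    rw [e2]
    have n1 : ‖(V * α j - α j * V) * p‖ ≤ ε * 1 := (norm_mul_le _ _).trans (by gcongr)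
    have n2 : ‖V * (p * α j - α j * p)‖ ≤ 1 * commNorm α p :=
      (norm_mul_le _ _).trans (by
        have := le_commNorm α p j
        gcongr)
    have := norm_add_le ((V * α j - α j * V) * p) (V * (p * α j - α j * p))
    linarith

lemma main {M : VonNeumannAlgebra H} {τ : (H →L[ℂ] H) → ENNReal} (hτ : IsFNSTrace M τ)
    {n : ℕ} (hn : 0 < n) {α : Fin n → (H →L[ℂ] H)} (hα : IsCommutingSelfAdjointTuple M α)
    (htriv : ∀ x ∈ WZstar M (Set.range α), IsFiniteProjection M x → x = 0)
    (p : ℕ → (H →L[ℂ] H)) (hp : ∀ k, IsTauFiniteProjection M τ (p k))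
    (ε : ℕ → ℝ) (hε : ∀ k, 0 < ε k) :
    ∃ w : ℕ → (H →L[ℂ] H),
      (∀ k, w k ∈ M) ∧
      (∀ l k, star (w l) * w k = if l = k then p k else 0) ∧
      ∀ k, commNorm α (w k) ≤ ε k + commNorm α (p k) := by
  choose W hWM hWp hWq hWc using fun (k : ℕ) (q : {q // IsTauFiniteProjection M τ q}) =>
    single_step hτ hn hα htriv (hp k) q.2 (hε k)
  have hnext : ∀ (k : ℕ) (q : {q // IsTauFiniteProjection M τ q}),
      IsTauFiniteProjection M τ (q.1 + W k q * star (W k q)) := by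
    rintro k ⟨q, hq⟩
    set w := W k ⟨q, hq⟩ with hw
    have hwM : w ∈ M := hWM k ⟨q, hq⟩
    have hwp : star w * w = p k := hWp k ⟨q, hq⟩
    have hqw : q * w = 0 := hWq k ⟨q, hq⟩
    have hwq : star w * q = 0 := by simpa [hq.2.1.2] using congrArg star hqw
    have hpi : w * (star w * w) = w := by rw [hwp]; exact pi_of_source (hp k).2.1 hwp
    refine ⟨add_mem hq.1 (mul_mem hwM (star_mem hwM)), ⟨?_, by simp [hq.2.1.2]⟩, ?_⟩
    · simp only [mul_add, add_mul]
      rw [hq.2.1.1, ← mul_assoc q, hqw, mul_assoc w _ q, hwq, zero_mul, mul_zero,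
        mul_assoc w, ← mul_assoc (star w), ← mul_assoc w, hpi]
      simp
    · rw [hτ.additive _ _ hq.1 (mul_mem hwM (star_mem hwM)) (proj_nonneg hq.2.1)
        (mul_star_self_nonneg _), ← hτ.tracial w hwM, hwp]
      exact ENNReal.add_lt_top.mpr ⟨hq.2.2, (hp k).2.2⟩
  let Q : ℕ → {q // IsTauFiniteProjection M τ q} := fun k => Nat.rec
    ⟨0, zero_mem M, by simp [IsProjection], by rw [hτ.map_zero]; exact ENNReal.zero_lt_top⟩
    (fun k q => ⟨q.1 + W k q * star (W k q), hnext k q⟩) k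
  have hQs : ∀ k, (Q (k + 1)).1 = (Q k).1 + W k (Q k) * star (W k (Q k)) := fun k => rfl
  have hQw : ∀ l k, l < k → (Q k).1 * W l (Q l) = W l (Q l) := by
    intro l k hlk
    induction k, hlk using Nat.le_induction with
    | base =>
      rw [hQs, add_mul, hWq, zero_add, mul_assoc, hWp]
      exact pi_of_source (hp l).2.1 (hWp l _)
    | succ k hk ih =>
      have h0 : star (W k (Q k)) * (Q k).1 = 0 := by
        simpa [(Q k).2.2.1.2] using congrArg star (hWq k (Q k))
      have h1 : star (W k (Q k)) * W l (Q l) = 0 := by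
        rw [← ih, ← mul_assoc, h0, zero_mul]
      rw [hQs, add_mul, ih, mul_assoc, h1, mul_zero, add_zero]
  have hlt : ∀ l k, l < k → star (W l (Q l)) * W k (Q k) = 0 := by
    intro l k hlk
    have := congrArg star (hQw l k hlk)
    rw [star_mul, (Q k).2.2.1.2] at this
    rw [← this, mul_assoc, hWq, mul_zero]
  refine ⟨fun k => W k (Q k), fun k => hWM k _, ?_, fun k => hWc k _⟩
  intro l k
  rcases lt_trichotomy l k with h | h | h
  · rw [if_neg h.ne, hlt l k h]
  · subst h
    rw [if_pos rfl, hWp]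
  · rw [if_neg h.ne']
    simpa using congrArg star (hlt k l h)

end VNA18

open VNA in
/-- Given τ-finite projections `(p_k)` and positive `(ε_k)`, there are
partial isometries `(w_k)` with `w_l* w_k = δ_{l,k} p_k` and
`‖[w_k,α]‖ ≤ ε_k + ‖[p_k,α]‖`. -/
theorem statement_18 {H : Type*} [NormedAddCommGroup H] [InnerProductSpace ℂ H]
    [CompleteSpace H] (M : VonNeumannAlgebra H)
    (hM : ProperlyInfinite M) (hσ : SigmaFinite M)
    (τ : (H →L[ℂ] H) → ENNReal) (hτ : IsFNSTrace M τ)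
    (n : ℕ) (hn : 0 < n) (α : Fin n → (H →L[ℂ] H))
    (hα : IsCommutingSelfAdjointTuple M α)
    (htriv : ∀ x ∈ WZstar M (Set.range α), IsFiniteProjection M x → x = 0)
    (p : ℕ → (H →L[ℂ] H)) (hp : ∀ k, IsTauFiniteProjection M τ (p k))
    (ε : ℕ → ℝ) (hε : ∀ k, 0 < ε k) :
    ∃ w : ℕ → (H →L[ℂ] H),
      (∀ k, w k ∈ M) ∧
      (∀ l k, star (w l) * w k = if l = k then p k else 0) ∧
      ∀ k, commNorm α (w k) ≤ ε k + commNorm α (p k) := by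
  exact VNA18.main hτ hn hα htriv p hp ε hε
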